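/- Let (A,+) be a group and let φ₀ = π^a, φ₁ = π^b for a permutation π of A of order m, where φ₀, φ₁ are automorphisms of (A,+) and a,b ∈ ℕ. Then the linear quasigroup x ∘ y = φ₀(x) + φ₁(y) satisfies a bracketing identity t ≈ t' if and only if a·ld_T(i) + b·rd_T(i) ≡ a·ld_{T'}(i) + b·rd_{T'}(i) (mod m) for all leaves i, where T, T' are the trees of t, t'. -/

import Mathlib

/-- Binary trees: every internal vertex has exactly a left and a right child. -/
inductive BTree : Type where
  | leaf : BTree
  | node : BTree → BTree → BTree

namespace BTree

/-- Number of leaves. -/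
def numLeaves : BTree → ℕ
  | leaf => 1
  | node l r => l.numLeaves + r.numLeaves

/-- Addresses of the leaves in left-to-right order, as words over `{0,1}`;
`false` records a left step (0) and `true` a right step (1). -/
def addrs : BTree → List (List Bool)
  | leaf => [[]]
  | node l r => (l.addrs.map (fun w => false :: w)) ++ (r.addrs.map (fun w => true :: w))

/-- Address of the `i`-th leaf (0-indexed, left to right). -/
def addr (T : BTree) (i : ℕ) : List Bool := T.addrs.getD i []

/-- Left depth of the `i`-th leaf: number of left steps (0's) in its address. -/
def ld (T : BTree) (i : ℕ) : ℕ := (T.addr i).count false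

/-- Right depth of the `i`-th leaf: number of right steps (1's) in its address. -/
def rd (T : BTree) (i : ℕ) : ℕ := (T.addr i).count true

/-- Total depth of the `i`-th leaf. -/
def depth (T : BTree) (i : ℕ) : ℕ := (T.addr i).length

end BTree

/-- Evaluation of the bracketing corresponding to a binary tree, with the
variables `f k, f (k+1), ...` plugged in at the leaves, left to right. -/
def BTree.evalAux {A : Type*} (op : A → A → A) (f : ℕ → A) : BTree → ℕ → A
  | .leaf, k => f k
  | .node l r, k => op (l.evalAux op f k) (r.evalAux op f (k + l.numLeaves))

/-- Term operation induced on `A` by the bracketing corresponding to `T`. -/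
def BTree.eval {A : Type*} (op : A → A → A) (T : BTree) (f : ℕ → A) : A :=
  T.evalAux op f 0

/-- `φ_w` for a word `w` over `{0,1}`: `φ_ε = id`, `φ_{0w} = φ₀ ∘ φ_w`, `φ_{1w} = φ₁ ∘ φ_w`. -/
def phiWord {A : Type*} (φ₀ φ₁ : A → A) : List Bool → A → A
  | [] => id
  | c :: w => (if c then φ₁ else φ₀) ∘ phiWord φ₀ φ₁ w

/-!
Since `φ₀` and `φ₁` are additive, a bracketing expands to the sum over its leaves, from left to
right, of `φ_w` applied to the variable at the leaf with address `w`. Substituting `0` for every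
variable but one isolates a single summand, so a bracketing identity holds iff corresponding leaves
carry the same map `φ_w`. For `φ₀ = π^a` and `φ₁ = π^b`, the map `φ_w` is the power of `π` whose
exponent is `a` times the left depth plus `b` times the right depth.
-/

theorem phiWord_zero {M : Type*} [Zero M] {φ₀ φ₁ : M → M} (h₀ : φ₀ 0 = 0) (h₁ : φ₁ 0 = 0)
    (w : List Bool) : phiWord φ₀ φ₁ w 0 = 0 := by
  induction w with
  | nil => rfl
  | cons c w ih => cases c <;> simp [phiWord, ih, h₀, h₁]

theorem phiWord_perm_pow {α : Type*} (π : Equiv.Perm α) (a b : ℕ) (w : List Bool) :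
    phiWord ⇑(π ^ a) ⇑(π ^ b) w = ⇑(π ^ (a * w.count false + b * w.count true)) := by
  induction w with
  | nil => simp [phiWord]
  | cons c w ih =>
    rw [phiWord, ih]
    cases c
    · rw [if_neg Bool.false_ne_true, ← Equiv.Perm.coe_mul, ← pow_add, List.count_cons_self,
        List.count_cons_of_ne Bool.false_ne_true]
      congr 2
      ring
    · rw [if_pos rfl, ← Equiv.Perm.coe_mul, ← pow_add, List.count_cons_self,
        List.count_cons_of_ne Bool.false_ne_true.symm]
      congr 2
      ring

theorem phiWord_perm_pow_eq_iff {α : Type*} (π : Equiv.Perm α) (a b : ℕ) (w w' : List Bool) :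
    phiWord ⇑(π ^ a) ⇑(π ^ b) w = phiWord ⇑(π ^ a) ⇑(π ^ b) w' ↔
      a * w.count false + b * w.count true
        ≡ a * w'.count false + b * w'.count true [MOD orderOf π] := by
  rw [phiWord_perm_pow, phiWord_perm_pow, DFunLike.coe_fn_eq, pow_eq_pow_iff_modEq]

namespace BTree

theorem length_addrs (T : BTree) : T.addrs.length = T.numLeaves := by
  induction T with
  | leaf => rfl
  | node l r ihl ihr => simp [addrs, numLeaves, ihl, ihr]

theorem addr_node_of_lt (l r : BTree) {i : ℕ} (hi : i < l.numLeaves) :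
    (node l r).addr i = false :: l.addr i := by
  simp [addr, addrs, List.getD_eq_getElem?_getD, List.getElem?_append, length_addrs, hi]

theorem addr_node_add (l r : BTree) {i : ℕ} (hi : i < r.numLeaves) :
    (node l r).addr (l.numLeaves + i) = true :: r.addr i := by
  simp [addr, addrs, List.getD_eq_getElem?_getD, length_addrs, hi]

variable {M : Type*} [AddMonoid M] (φ₀ φ₁ : M →+ M)

theorem evalAux_eq_sum_phiWord (f : ℕ → M) (T : BTree) (k : ℕ) :
    T.evalAux (fun x y => φ₀ x + φ₁ y) f k =
      ((List.range T.numLeaves).map fun i => phiWord φ₀ φ₁ (T.addr i) (f (k + i))).sum := by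
  induction T generalizing k with
  | leaf => simp [evalAux, numLeaves, addr, addrs, phiWord]
  | node l r ihl ihr =>
    simp only [evalAux, numLeaves, ihl, ihr, map_list_sum, List.range_add, List.map_append,
      List.sum_append, List.map_map]
    congr 2 <;> refine List.map_congr_left fun i hi => ?_
    · simp [addr_node_of_lt l r (List.mem_range.1 hi), phiWord]
    · simp [addr_node_add l r (List.mem_range.1 hi), phiWord, add_assoc]

theorem eval_eq_sum_phiWord (T : BTree) (f : ℕ → M) :
    T.eval (fun x y => φ₀ x + φ₁ y) f =
      ((List.range T.numLeaves).map fun i => phiWord φ₀ φ₁ (T.addr i) (f i)).sum := by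
  simpa only [eval, zero_add] using evalAux_eq_sum_phiWord φ₀ φ₁ f T 0

theorem eval_single (T : BTree) {i : ℕ} (hi : i < T.numLeaves) (x : M) :
    T.eval (fun x y => φ₀ x + φ₁ y) (Pi.single i x) = phiWord φ₀ φ₁ (T.addr i) x := by
  rw [eval_eq_sum_phiWord, List.sum_map_eq_nsmul_single i]
  · rw [List.count_eq_one_of_mem List.nodup_range (List.mem_range.2 hi), one_nsmul,
      Pi.single_eq_same]
  · intro j hj _
    rw [Pi.single_eq_of_ne hj, phiWord_zero (map_zero φ₀) (map_zero φ₁)]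

theorem forall_eval_eq_iff_phiWord_addr_eq {T T' : BTree} (hTT' : T.numLeaves = T'.numLeaves) :
    (∀ f : ℕ → M, T.eval (fun x y => φ₀ x + φ₁ y) f = T'.eval (fun x y => φ₀ x + φ₁ y) f) ↔
      ∀ i < T.numLeaves, phiWord φ₀ φ₁ (T.addr i) = phiWord φ₀ φ₁ (T'.addr i) := by
  constructor
  · intro h i hi
    funext x
    rw [← eval_single φ₀ φ₁ T hi, ← eval_single φ₀ φ₁ T' (hTT' ▸ hi), h]
  · intro h f
    rw [eval_eq_sum_phiWord, eval_eq_sum_phiWord, ← hTT']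
    congr 1
    exact List.map_congr_left fun i hi => congrFun (h i (List.mem_range.1 hi)) (f i)

end BTree

theorem stmt13_general {M : Type*} [AddMonoid M] (π : Equiv.Perm M) (a b : ℕ)
    (h₀ : ∀ x y : M, (π ^ a) (x + y) = (π ^ a) x + (π ^ a) y)
    (h₁ : ∀ x y : M, (π ^ b) (x + y) = (π ^ b) x + (π ^ b) y)
    {T T' : BTree} (hTT' : T.numLeaves = T'.numLeaves) :
    (∀ f : ℕ → M, T.eval (fun x y => (π ^ a) x + (π ^ b) y) f
        = T'.eval (fun x y => (π ^ a) x + (π ^ b) y) f) ↔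
      ∀ i < T.numLeaves,
        a * T.ld i + b * T.rd i ≡ a * T'.ld i + b * T'.rd i [MOD orderOf π] := by
  let φ₀ : M ≃+ M := AddEquiv.mk' (π ^ a) h₀
  let φ₁ : M ≃+ M := AddEquiv.mk' (π ^ b) h₁
  exact (BTree.forall_eval_eq_iff_phiWord_addr_eq φ₀.toAddMonoidHom φ₁.toAddMonoidHom hTT').trans
    (forall₂_congr fun _ _ => phiWord_perm_pow_eq_iff π a b _ _)

/-- If `φ₀ = π^a` and `φ₁ = π^b` for a permutation `π` of order `m` (with both
powers automorphisms of `(A,+)`), then `x ∘ y = φ₀(x) + φ₁(y)` satisfies `t ≈ t'`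
iff `a·ld_T(i) + b·rd_T(i) ≡ a·ld_{T'}(i) + b·rd_{T'}(i) (mod m)` for all `i`. -/
theorem stmt13 (A : Type*) [AddGroup A] (π : Equiv.Perm A) (a b m : ℕ)
    (hm : orderOf π = m) (hm0 : 0 < m)
    (h0 : ∀ x y : A, (π ^ a) (x + y) = (π ^ a) x + (π ^ a) y)
    (h1 : ∀ x y : A, (π ^ b) (x + y) = (π ^ b) x + (π ^ b) y)
    (T T' : BTree) (n : ℕ) (hT : T.numLeaves = n) (hT' : T'.numLeaves = n) :
    (∀ f : ℕ → A, T.eval (fun x y => (π ^ a) x + (π ^ b) y) f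
        = T'.eval (fun x y => (π ^ a) x + (π ^ b) y) f) ↔
      ∀ i < n, Nat.ModEq m (a * T.ld i + b * T.rd i) (a * T'.ld i + b * T'.rd i) := by
  subst hm hT
  exact stmt13_general π a b h0 h1 hT'.symm
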